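/- Let n ≥ 2 be an integer and let λ, ν ∈ ℂ satisfy Re(λ−ν) > 0 and Re(λ+ν) > n−1. Then for every continuous compactly supported function F : ℝⁿ → ℂ and every x ∈ ℝⁿ⁻¹, the function (y, yₙ) ↦ F(y, yₙ)·k_{λ,ν}(x−y, −yₙ) is Lebesgue integrable on ℝⁿ; in particular the value (A_{λ,ν}F)(x) = ∫_{ℝⁿ} F(y, yₙ) k_{λ,ν}(x−y, −yₙ) dy dyₙ is well defined. -/

import Mathlib

open MeasureTheory

/-- The kernel `k_{λ,ν}(x, xₙ) = |xₙ|^{λ+ν−n} (|x|² + xₙ²)^{−ν}` on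
`ℝⁿ = ℝⁿ⁻¹ × ℝ`, assigned the value `0` on the null set `{xₙ = 0}`. -/
noncomputable def kker (n : ℕ) (lam nu : ℂ) :
    EuclideanSpace ℝ (Fin (n - 1)) × ℝ → ℂ := fun p =>
  if p.2 = 0 then 0
  else ((|p.2| : ℝ) : ℂ) ^ (lam + nu - (n : ℂ)) *
    ((‖p.1‖ ^ 2 + p.2 ^ 2 : ℝ) : ℂ) ^ (-nu)

lemma aux_bound (m a b R : ℝ) (hm : 0 < m) (ha : -1 < a) (hab : -(m+1) < a - 2*b) :
    ∃ c d C : ℝ, 0 ≤ C ∧ c < m ∧ d < 1 ∧ ∀ r t : ℝ, 0 < r → r < R → 0 < t → t < R →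
      t ^ a * (r ^ 2 + t ^ 2) ^ (-b) ≤ C * (r ^ (-c) * t ^ (-d)) := by
  rcases le_or_gt b 0 with hb | hb
  · refine ⟨0, -a, (R^2+R^2) ^ (-b), by positivity, hm, by linarith, ?_⟩
    intro r t hr hrR ht htR
    have h : (r^2+t^2) ^ (-b) ≤ (R^2+R^2) ^ (-b) := by
      apply Real.rpow_le_rpow (by positivity) (by gcongr) (by linarith)
    simp only [neg_zero, Real.rpow_zero, one_mul, neg_neg]
    rw [mul_comm]
    gcongr
  · obtain ⟨c, hc0, hc1, hc2, hc3⟩ : ∃ c : ℝ, 0 ≤ c ∧ c < m ∧ c ≤ 2*b ∧ 2*b-a-1 < c := by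
      obtain ⟨c, h1, h2⟩ := exists_between (show max 0 (2*b-a-1) < min m (2*b) by
        simp only [max_lt_iff, lt_min_iff]; refine ⟨⟨hm, by linarith⟩, by linarith, by linarith⟩)
      simp only [max_lt_iff, lt_min_iff] at h1 h2
      exact ⟨c, h1.1.le, h2.1, h2.2.le, h1.2⟩
    refine ⟨c, 2*b - c - a, 1, by norm_num, hc1, by linarith, ?_⟩
    intro r t hr hrR ht htR
    have e : (r^2+t^2) ^ (-b) = (r^2+t^2) ^ (-c/2) * (r^2+t^2) ^ (-(2*b-c)/2) := by
      rw [← Real.rpow_add (by positivity)]; congr 1; ring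
    have e1 : (r^2+t^2) ^ (-c/2) ≤ r ^ (-c) := by
      calc _ ≤ (r^2) ^ (-c/2) := Real.rpow_le_rpow_of_nonpos (by positivity) (by nlinarith) (by linarith)
        _ = _ := by rw [← Real.rpow_natCast, ← Real.rpow_mul hr.le]; congr 1; push_cast; ring
    have e2 : (r^2+t^2) ^ (-(2*b-c)/2) ≤ t ^ (-(2*b-c)) := by
      calc _ ≤ (t^2) ^ (-(2*b-c)/2) := Real.rpow_le_rpow_of_nonpos (by positivity) (by nlinarith) (by linarith)
        _ = _ := by rw [← Real.rpow_natCast, ← Real.rpow_mul ht.le]; congr 1; push_cast; ring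
    have e3 : t ^ (-(2*b-c-a)) = t ^ a * t ^ (-(2*b-c)) := by
      rw [← Real.rpow_add ht]; congr 1; ring
    rw [e, e3]
    calc _ ≤ t ^ a * (r ^ (-c) * t ^ (-(2*b-c))) := by gcongr
      _ = _ := by ring

lemma aux_int {E : Type*} [NormedAddCommGroup E] [NormedSpace ℝ E] [FiniteDimensional ℝ E]
    [MeasurableSpace E] [BorelSpace E] (μ : Measure E) [μ.IsAddHaarMeasure]
    (hd : 1 ≤ Module.finrank ℝ E) (c R : ℝ) (hc : c < Module.finrank ℝ E) :
    Integrable ((Metric.ball (0:E) R).indicator fun z => ‖z‖ ^ (-c)) μ := by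
  rw [integrable_indicator_iff measurableSet_ball]
  refine integrableOn_ball_of_norm_le_rpow (C := 1) hd hc (Filter.Eventually.of_forall fun z => ?_) ?_
  · rw [Real.norm_of_nonneg (by positivity), one_mul]
  · exact (measurable_norm.pow_const _).aestronglyMeasurable

lemma kker_meas (n : ℕ) (lam nu : ℂ) : Measurable (kker n lam nu) := by
  unfold kker
  refine Measurable.ite (measurable_snd (measurableSet_singleton 0)) measurable_const ?_
  refine Measurable.mul (Measurable.pow_const ?_ _) (Measurable.pow_const ?_ _) <;> fun_prop

theorem symmetry_breaking_integrand_integrable (n : ℕ) (hn : 2 ≤ n) (lam nu : ℂ)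
    (h1 : 0 < (lam - nu).re) (h2 : (n : ℝ) - 1 < (lam + nu).re)
    (F : EuclideanSpace ℝ (Fin (n - 1)) × ℝ → ℂ)
    (hF : Continuous F) (hsupp : HasCompactSupport F)
    (x : EuclideanSpace ℝ (Fin (n - 1))) :
    Integrable (fun p => F p * kker n lam nu (x - p.1, -p.2)) volume := by
  have hn1 : ((n - 1 : ℕ) : ℝ) = n - 1 := by rw [Nat.cast_sub (by omega)]; simp
  have hfr : Module.finrank ℝ (EuclideanSpace ℝ (Fin (n-1))) = n - 1 := by simp
  have hn2 : (2:ℝ) ≤ n := by exact_mod_cast hn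
  simp only [Complex.sub_re, Complex.add_re] at h1 h2
  obtain ⟨M, hM⟩ := hsupp.exists_bound_of_continuous hF
  obtain ⟨R0, hR0⟩ := hsupp.isCompact.isBounded.exists_norm_le
  set R : ℝ := ‖x‖ + |R0| + 1 with hR
  obtain ⟨c, d, C, hC, hc, hd, hb⟩ := aux_bound (n-1) ((lam+nu).re - n) nu.re R (by linarith)
    (by simp only [Complex.add_re]; linarith) (by simp only [Complex.add_re]; linarith)
  have hI1 := aux_int (volume : Measure (EuclideanSpace ℝ (Fin (n-1)))) (by rw [hfr]; omega) c R
    (by rw [hfr, hn1]; exact hc)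
  have hI2 := aux_int (volume : Measure ℝ) (by simp) d R (by simpa using hd)
  have hI := (hI1.mul_prod hI2).const_mul (M * C)
  have hne : Nontrivial (EuclideanSpace ℝ (Fin (n-1))) :=
    Module.nontrivial_of_finrank_pos (R := ℝ) (by rw [hfr]; omega)
  have key : Integrable (fun q : EuclideanSpace ℝ (Fin (n - 1)) × ℝ =>
      F (x - q.1, -q.2) * kker n lam nu q) volume := by
    refine Integrable.mono' hI ?_ ?_
    · refine AEStronglyMeasurable.mul (Continuous.aestronglyMeasurable (by fun_prop))
        (kker_meas n lam nu).aestronglyMeasurable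
    · have hae : ∀ᵐ q : EuclideanSpace ℝ (Fin (n - 1)) × ℝ ∂(volume.prod volume), q.1 ≠ 0 :=
        Measure.quasiMeasurePreserving_fst.ae (Measure.ae_ne volume 0)
      filter_upwards [hae] with q hq
      have hM0 : 0 ≤ M := (norm_nonneg _).trans (hM 0)
      have hrhs : 0 ≤ M * C * ((Metric.ball 0 R).indicator (fun z => ‖z‖ ^ (-c)) q.1 *
          (Metric.ball 0 R).indicator (fun z : ℝ => ‖z‖ ^ (-d)) q.2) := by
        refine mul_nonneg (mul_nonneg hM0 hC) (mul_nonneg ?_ ?_) <;>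
          exact Set.indicator_nonneg (fun z _ => by positivity) _
      by_cases ht : q.2 = 0
      · simpa [kker, ht] using hrhs
      by_cases hz : F (x - q.1, -q.2) = 0
      · simpa [hz] using hrhs
      have hmem := hR0 _ (subset_tsupport F hz)
      rw [Prod.norm_def, max_le_iff] at hmem
      simp only [norm_neg] at hmem
      have hq1 : ‖q.1‖ < R := by
        have : ‖q.1‖ ≤ ‖x‖ + ‖x - q.1‖ := by
          calc ‖q.1‖ = ‖x - (x - q.1)‖ := by simp
            _ ≤ _ := norm_sub_le _ _
        linarith [le_abs_self R0, hmem.1]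
      have hq2 : ‖q.2‖ < R := by linarith [le_abs_self R0, hmem.2, norm_nonneg x]
      rw [Set.indicator_of_mem (by simpa using hq1), Set.indicator_of_mem (by simpa using hq2)]
      have hr : 0 < ‖q.1‖ := norm_pos_iff.mpr hq
      have htp : 0 < |q.2| := abs_pos.mpr ht
      have := hb ‖q.1‖ |q.2| hr hq1 htp hq2
      rw [norm_mul, mul_assoc]
      refine mul_le_mul (hM _) ?_ (norm_nonneg _) hM0
      rw [sq_abs] at this
      simp only [kker, if_neg ht, norm_mul]
      rw [Complex.norm_cpow_eq_rpow_re_of_pos htp,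
        Complex.norm_cpow_eq_rpow_re_of_pos (by positivity)]
      simpa using this
  have mp : MeasurePreserving (fun p : EuclideanSpace ℝ (Fin (n - 1)) × ℝ => (x - p.1, -p.2))
      volume volume :=
    (Measure.measurePreserving_sub_left volume x).prod (Measure.measurePreserving_neg volume)
  have := mp.integrable_comp_of_integrable key
  simpa [Function.comp_def] using this
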